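/- arXiv:1901.01458 — 2 statements merged into one kernel-verified Lean document; each statement's English description precedes it below -/
import Mathlib

section
/- Let A ∈ ℂ^{n×n} be a Hermitian positive semidefinite matrix and let λ : {1,…,n} → ℝ be an enumeration of its eigenvalues with multiplicity arranged in descending order (λ_1 ≥ λ_2 ≥ … ≥ λ_n ≥ 0). Let d ≤ n and let V ∈ ℂ^{n×d} satisfy V^H V = I_d. Then the determinant det(I_d + V^H A V) is a real number and satisfies det(I_d + V^H A V) ≤ ∏_{i=1}^{d} (1 + λ_i). -/
open Matrix
open scoped ComplexOrder

lemma exists_diagonalizer {m : ℕ} (B : Matrix (Fin m) (Fin m) ℂ) (hB : B.IsHermitian)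
    (τ : Equiv.Perm (Fin m)) :
    ∃ Q : Matrix (Fin m) (Fin m) ℂ, Qᴴ * Q = 1 ∧ Q * Qᴴ = 1 ∧
      Qᴴ * B * Q = diagonal (fun i => ((hB.eigenvalues (τ i) : ℝ) : ℂ)) := by
  let P : Matrix (Fin m) (Fin m) ℂ := hB.eigenvectorUnitary
  have h1 : Pᴴ * P = 1 := Unitary.coe_star_mul_self hB.eigenvectorUnitary
  have h2 : Pᴴ * B * P = diagonal (fun i => ((hB.eigenvalues i : ℝ) : ℂ)) := by
    have h := hB.conjStarAlgAut_star_eigenvectorUnitary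
    rw [Unitary.conjStarAlgAut_star_apply] at h
    exact h
  have h3 : (P.submatrix id τ)ᴴ * P.submatrix id τ = 1 := by
    have := congrArg (fun X => X.submatrix τ τ) h1
    ext i j
    have := congrFun (congrFun this i) j
    simpa [Matrix.mul_apply, Matrix.one_apply] using this
  refine ⟨P.submatrix id τ, h3, mul_eq_one_comm.mp h3, ?_⟩
  ext i j
  have := congrFun (congrFun h2 (τ i)) (τ j)
  simpa [Matrix.mul_apply, Matrix.diagonal_apply] using this

lemma quad_form {n d : ℕ} (W : Matrix (Fin n) (Fin d) ℂ) (a : Fin n → ℝ) (b : Fin d → ℝ)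
    (h : Wᴴ * diagonal (fun i => (a i : ℂ)) * W = diagonal (fun i => (b i : ℂ)))
    (y : Fin d → ℂ) :
    ∑ j, a j * Complex.normSq ((W *ᵥ y) j) = ∑ i, b i * Complex.normSq (y i) := by
  have key : ∀ (m : ℕ) (c : Fin m → ℝ) (z : Fin m → ℂ),
      star z ⬝ᵥ (diagonal (fun i => (c i : ℂ)) *ᵥ z)
        = ((∑ i, c i * Complex.normSq (z i) : ℝ) : ℂ) := by
    intro m c z
    push_cast
    simp only [dotProduct, mulVec_diagonal]
    refine Finset.sum_congr rfl fun i _ => ?_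
    rw [Complex.normSq_eq_conj_mul_self]
    simp only [Pi.star_apply, RCLike.star_def]
    ring
  have e : star (W *ᵥ y) ⬝ᵥ (diagonal (fun i => (a i : ℂ)) *ᵥ (W *ᵥ y))
      = star y ⬝ᵥ (diagonal (fun i => (b i : ℂ)) *ᵥ y) := by
    rw [← h, star_mulVec, ← dotProduct_mulVec, mulVec_mulVec, mulVec_mulVec, Matrix.mul_assoc]
  rw [key, key] at e
  exact_mod_cast e

lemma interlace {n d : ℕ} (hdn : d ≤ n) (W : Matrix (Fin n) (Fin d) ℂ)
    (a : Fin n → ℝ) (b : Fin d → ℝ) (ha : Antitone a) (hb : Antitone b)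
    (hW : Wᴴ * W = 1)
    (h : Wᴴ * diagonal (fun i => (a i : ℂ)) * W = diagonal (fun i => (b i : ℂ)))
    (k : Fin d) : b k ≤ a (Fin.castLE hdn k) := by
  let M : Matrix (Fin d) (Fin d) ℂ := fun j =>
    if j < k then W (Fin.castLE hdn j) else if j = k then 0 else Pi.single j 1
  have hM : M.det = 0 := det_eq_zero_of_row_eq_zero k (fun j => by simp [M])
  obtain ⟨y, hy0, hy⟩ := exists_mulVec_eq_zero_iff.mpr hM
  have hyk : ∀ i, k < i → y i = 0 := by
    intro i hi
    have := congrFun hy i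
    simpa [mulVec, M, not_lt.mpr hi.le, hi.ne'] using this
  have hWy : ∀ j : Fin n, j < Fin.castLE hdn k → (W *ᵥ y) j = 0 := by
    intro j hj
    have hj' : j.val < k.val := hj
    have := congrFun hy ⟨j.val, hj'.trans k.2⟩
    have hlt : (⟨j.val, hj'.trans k.2⟩ : Fin d) < k := hj'
    simpa [mulVec, M, hlt] using this
  have q1 := quad_form W a b h y
  have q2 := quad_form W (fun _ => 1) (fun _ => 1) (by simpa using hW) y
  simp only [one_mul] at q2
  have l1 : ∑ j, a j * Complex.normSq ((W *ᵥ y) j)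
      ≤ ∑ j, a (Fin.castLE hdn k) * Complex.normSq ((W *ᵥ y) j) := by
    refine Finset.sum_le_sum fun j _ => ?_
    by_cases hj : j < Fin.castLE hdn k
    · simp [hWy j hj]
    · exact mul_le_mul_of_nonneg_right (ha (not_lt.mp hj)) (Complex.normSq_nonneg _)
  have l2 : ∑ i, b k * Complex.normSq (y i) ≤ ∑ i, b i * Complex.normSq (y i) := by
    refine Finset.sum_le_sum fun i _ => ?_
    by_cases hi : k < i
    · simp [hyk i hi]
    · exact mul_le_mul_of_nonneg_right (hb (not_lt.mp hi)) (Complex.normSq_nonneg _)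
  rw [← Finset.mul_sum] at l1 l2
  rw [q2] at l1
  have hpos : 0 < ∑ i, Complex.normSq (y i) := by
    obtain ⟨i, hi⟩ := Function.ne_iff.mp hy0
    exact Finset.sum_pos' (fun i _ => Complex.normSq_nonneg _)
      ⟨i, Finset.mem_univ _, Complex.normSq_pos.mpr hi⟩
  exact le_of_mul_le_mul_right (l2.trans (q1 ▸ l1)) hpos

/-- Upper-bound direction of Corollary 2: for a Hermitian positive semidefinite
`A : ℂ^{n×n}` with eigenvalues (with multiplicity) enumerated in descending order by
`lam`, and any semi-unitary `V : ℂ^{n×d}` (`Vᴴ V = I_d`, `d ≤ n`), the determinant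
`det(I_d + Vᴴ A V)` is a real number and is at most `∏_{i=1}^{d} (1 + lam i)`. -/
theorem stmt_3 (n d : ℕ) (hdn : d ≤ n)
    (A : Matrix (Fin n) (Fin n) ℂ) (hA : A.PosSemidef)
    (lam : Fin n → ℝ)
    (hlam : ∃ σ : Equiv.Perm (Fin n), lam = hA.1.eigenvalues ∘ σ)
    (hdesc : Antitone lam)
    (V : Matrix (Fin n) (Fin d) ℂ) (hV : Vᴴ * V = 1) :
    ∃ r : ℝ, (1 + Vᴴ * A * V).det = (r : ℂ) ∧
      r ≤ ∏ i : Fin d, (1 + lam (Fin.castLE hdn i)) := by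
  obtain ⟨σ, rfl⟩ := hlam
  have hB : (Vᴴ * A * V).PosSemidef := hA.conjTranspose_mul_mul_same V
  let τ : Equiv.Perm (Fin d) := Tuple.sort (fun i => - hB.1.eigenvalues i)
  have hτ : Antitone (fun i => hB.1.eigenvalues (τ i)) := by
    intro i j hij
    have := Tuple.monotone_sort (fun i => - hB.1.eigenvalues i) hij
    simpa [τ] using this
  obtain ⟨U, hU1, hU2, hUA⟩ := exists_diagonalizer A hA.1 σ
  obtain ⟨Q, hQ1, hQ2, hQB⟩ := exists_diagonalizer _ hB.1 τ
  refine ⟨∏ i, (1 + hB.1.eigenvalues (τ i)), ?_, ?_⟩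
  · have h1 : Qᴴ * (1 + Vᴴ * A * V) * Q
        = diagonal (fun i => ((1 + hB.1.eigenvalues (τ i) : ℝ) : ℂ)) := by
      rw [Matrix.mul_add, Matrix.add_mul, hQB, Matrix.mul_one, hQ1, ← diagonal_one, diagonal_add]
      simp
    have h2 := congrArg det h1
    have h3 := congrArg det hQ1
    rw [det_mul, det_one] at h3
    rw [det_mul, det_mul, det_diagonal, mul_right_comm, h3, one_mul] at h2
    rw [h2]
    push_cast
    rfl
  · refine Finset.prod_le_prod (fun i _ => ?_) (fun i _ => ?_)
    · have := hB.eigenvalues_nonneg (τ i)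
      linarith
    · have hW : (Uᴴ * V * Q)ᴴ * (Uᴴ * V * Q) = 1 := by
        calc _ = Qᴴ * (Vᴴ * (U * Uᴴ) * V) * Q := by
              simp only [conjTranspose_mul, conjTranspose_conjTranspose, Matrix.mul_assoc]
          _ = 1 := by rw [hU2, Matrix.mul_one, hV, Matrix.mul_one, hQ1]
      have hWD : (Uᴴ * V * Q)ᴴ * (Uᴴ * A * U) * (Uᴴ * V * Q) = Qᴴ * (Vᴴ * A * V) * Q := by
        calc _ = Qᴴ * (Vᴴ * ((U * Uᴴ) * A * (U * Uᴴ)) * V) * Q := by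
              simp only [conjTranspose_mul, conjTranspose_conjTranspose, Matrix.mul_assoc]
          _ = _ := by rw [hU2, Matrix.mul_one, Matrix.one_mul]
      rw [hUA, hQB] at hWD
      have := interlace hdn (Uᴴ * V * Q) (fun j => hA.1.eigenvalues (σ j)) _ hdesc hτ hW hWD i
      simpa using this
end

section
/- Let Σ ∈ ℂ^{n×n} be Hermitian positive definite and G ∈ ℂ^{n×K}. Then for every d and every W ∈ ℂ^{d×n} such that W Σ W^H is invertible, the determinants det(I_d + W G G^H W^H (W Σ W^H)^{-1}) and det(I_K + G^H Σ^{-1} G) are real numbers and det(I_d + W G G^H W^H (W Σ W^H)^{-1}) ≤ det(I_K + G^H Σ^{-1} G). -/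
open Matrix
open scoped ComplexOrder

lemma one_le_det_one_add {m : ℕ} (Q : Matrix (Fin m) (Fin m) ℂ) (hQ : Q.PosSemidef) :
    1 ≤ (1 + Q).det := by
  have h := hQ.isHermitian.spectral_theorem
  have h2 : (1 + Q).det = ∏ i, (1 + (hQ.isHermitian.eigenvalues i : ℂ)) := by
    have e := Matrix.eval_charpoly Q (-1)
    rw [hQ.isHermitian.charpoly_eq, Polynomial.eval_prod] at e
    have e2 : Matrix.scalar (Fin m) (-1 : ℂ) - Q = -(1 + Q) := by
      rw [map_neg, map_one]; abel
    rw [e2, Matrix.det_neg] at e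
    have e3 : ∀ i, Polynomial.eval (-1 : ℂ)
        (Polynomial.X - Polynomial.C (hQ.isHermitian.eigenvalues i : ℂ))
        = (-1) * (1 + (hQ.isHermitian.eigenvalues i : ℂ)) := by
      intro i; simp; ring
    have e4 : ∏ i, Polynomial.eval (-1 : ℂ)
        (Polynomial.X - Polynomial.C (hQ.isHermitian.eigenvalues i : ℂ))
        = (-1) ^ m * ∏ i, (1 + (hQ.isHermitian.eigenvalues i : ℂ)) := by
      rw [Finset.prod_congr rfl (fun i _ => e3 i), Finset.prod_mul_distrib]
      simp
    have e5 := e4.symm.trans e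
    rw [Fintype.card_fin] at e5
    exact (mul_left_cancel₀ (pow_ne_zero m (by norm_num)) e5).symm
  have h3 : (1 : ℝ) ≤ ∏ i, (1 + hQ.isHermitian.eigenvalues i) :=
    Finset.one_le_prod fun i _ => by linarith [hQ.eigenvalues_nonneg i]
  rw [h2]
  exact_mod_cast h3

lemma det_le_det_add {m : ℕ} (A D : Matrix (Fin m) (Fin m) ℂ) (hA : A.PosDef)
    (hD : D.PosSemidef) : A.det ≤ (A + D).det := by
  obtain ⟨C, rfl⟩ : ∃ C : Matrix (Fin m) (Fin m) ℂ, D = Cᴴ * C := by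
    open scoped MatrixOrder in
    exact CStarAlgebra.nonneg_iff_eq_star_mul_self.mp hD.nonneg
  rw [Matrix.det_add_mul _ _ ((Matrix.isUnit_iff_isUnit_det _).mp hA.isUnit)]
  have h := one_le_det_one_add _ (hA.inv.posSemidef.mul_mul_conjTranspose_same C)
  exact le_mul_of_one_le_right hA.posSemidef.det_nonneg h

/-- Pointwise comparison underlying Corollary 1 and Proposition 1: with `Σ ≻ 0`,
`G : ℂ^{n×K}`, and any `W : ℂ^{d×n}` with `W Σ Wᴴ` invertible, the determinants
`det(I_d + W G Gᴴ Wᴴ (W Σ Wᴴ)⁻¹)` and `det(I_K + Gᴴ Σ⁻¹ G)` are real numbers and the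
former is at most the latter. -/
theorem stmt_15 (n K : ℕ)
    (S : Matrix (Fin n) (Fin n) ℂ) (hS : S.PosDef)
    (G : Matrix (Fin n) (Fin K) ℂ)
    (d : ℕ) (W : Matrix (Fin d) (Fin n) ℂ) (hW : IsUnit (W * S * Wᴴ)) :
    ∃ r s : ℝ,
      (1 + W * G * Gᴴ * Wᴴ * (W * S * Wᴴ)⁻¹).det = (r : ℂ) ∧
      (1 + Gᴴ * S⁻¹ * G).det = (s : ℂ) ∧ r ≤ s := by
  have hT : (W * S * Wᴴ).PosSemidef := hS.posSemidef.mul_mul_conjTranspose_same W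
  have hTu := (Matrix.isUnit_iff_isUnit_det _).mp hW
  have hSu := (Matrix.isUnit_iff_isUnit_det _).mp hS.isUnit
  obtain ⟨P, hP⟩ : ∃ P, P = Wᴴ * (W * S * Wᴴ)⁻¹ * W := ⟨_, rfl⟩
  have hPp : P.PosSemidef := hP ▸ hT.inv.conjTranspose_mul_mul_same W
  have hPSP : P * S * P = P := by
    have : P * S * P = Wᴴ * ((W * S * Wᴴ)⁻¹ * (W * S * Wᴴ)) * (W * S * Wᴴ)⁻¹ * W := by
      rw [hP]; simp only [Matrix.mul_assoc]
    rw [this, Matrix.nonsing_inv_mul _ hTu, Matrix.mul_one, hP]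
  have hX : (S⁻¹ - P).PosSemidef := by
    have h := hS.posSemidef.mul_mul_conjTranspose_same (S⁻¹ - P)
    have e : (S⁻¹ - P) * S * (S⁻¹ - P)ᴴ = S⁻¹ - P := by
      rw [Matrix.conjTranspose_sub, hPp.isHermitian.eq, hS.inv.isHermitian.eq, Matrix.sub_mul,
        Matrix.nonsing_inv_mul _ hSu, Matrix.sub_mul, Matrix.mul_sub, Matrix.mul_sub, hPSP,
        Matrix.mul_assoc P S, Matrix.mul_nonsing_inv _ hSu]
      simp
    rwa [e] at h
  have hA : (1 + Gᴴ * P * G).PosDef :=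
    Matrix.PosDef.one.add_posSemidef (hPp.conjTranspose_mul_mul_same G)
  have hle := det_le_det_add _ _ hA (hX.conjTranspose_mul_mul_same G)
  have e1 : 1 + Gᴴ * P * G + Gᴴ * (S⁻¹ - P) * G = 1 + Gᴴ * S⁻¹ * G := by
    rw [Matrix.mul_sub, Matrix.sub_mul]; abel
  have e2 : (1 + W * G * Gᴴ * Wᴴ * (W * S * Wᴴ)⁻¹).det = (1 + Gᴴ * P * G).det := by
    have : W * G * Gᴴ * Wᴴ * (W * S * Wᴴ)⁻¹ = (W * G) * (Gᴴ * Wᴴ * (W * S * Wᴴ)⁻¹) := by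
      simp only [Matrix.mul_assoc]
    rw [this, Matrix.det_one_add_mul_comm, hP]
    simp only [Matrix.mul_assoc]
  rw [e1] at hle
  rw [e2]
  have h0 := hA.posSemidef.det_nonneg
  have h1 := h0.trans hle
  refine ⟨_, _, Complex.eq_re_of_ofReal_le (r := 0) (by simpa using h0),
    Complex.eq_re_of_ofReal_le (r := 0) (by simpa using h1), ?_⟩
  exact (Complex.le_def.mp hle).1
end
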